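/- For all i, j ∈ {1,…,n−c} such that blk(c+i) > blk(j) (i.e., such that the (i,j) entry of M(t) is the variable x_{c+i,j}), the power t^d divides, in R[t], the minor of M(t) obtained by deleting row i and column j. -/

import Mathlib

open Finset MvPolynomial

noncomputable section

/-- Sum of the first `j` block sizes (blocks are 1-indexed). -/
def blkSum (c : ℕ → ℕ) (j : ℕ) : ℕ := ∑ i ∈ Finset.Icc 1 j, c i

/-- Block index of `a ∈ {1,…,n}`: the least `j` with `a ≤ c 1 + ⋯ + c j`. -/
def blk (c : ℕ → ℕ) (a : ℕ) : ℕ := sInf {j | a ≤ blkSum c j}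

/-- The index set `P` of positions of the nilradical `m`: pairs `(a, b)` of indices
(0-indexed here, representing the 1-indexed pair `(a+1, b+1)`) with `b < a` and
`blk (b+1) < blk (a+1)`. -/
abbrev Pos (c : ℕ → ℕ) (n : ℕ) : Type :=
  {p : Fin n × Fin n // p.2 < p.1 ∧ blk c (p.2.1 + 1) < blk c (p.1.1 + 1)}

/-- The generic matrix `𝒳` of the nilradical `m`. -/
def genX (c : ℕ → ℕ) (n : ℕ) : Matrix (Fin n) (Fin n) (MvPolynomial (Pos c n) ℂ) :=
  Matrix.of fun a b =>
    if h : b < a ∧ blk c (b.1 + 1) < blk c (a.1 + 1) then X (⟨(a, b), h⟩ : Pos c n) else 0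

/-- The matrix `M(t)`: the `(n-c) × (n-c)` submatrix of `𝒳 + t · Id` consisting of
rows `c+1, …, n` and columns `1, …, n-c`, viewed over `R[t]`.  Here `m = n - c`. -/
def Mmat (c : ℕ → ℕ) (n m : ℕ) (h : m + c 1 = n) :
    Matrix (Fin m) (Fin m) (Polynomial (MvPolynomial (Pos c n) ℂ)) :=
  Matrix.of fun i j =>
    Polynomial.C (genX c n (Fin.cast h (i.addNat (c 1)))
        (Fin.castLE (le_trans (Nat.le_add_right m (c 1)) (le_of_eq h)) j))
      + if (Fin.cast h (i.addNat (c 1)) : Fin n)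
            = Fin.castLE (le_trans (Nat.le_add_right m (c 1)) (le_of_eq h)) j
        then Polynomial.X else 0

/-- `d := Σᵢ max (cᵢ - c, 0)` (truncated subtraction). -/
def dBS (c : ℕ → ℕ) (l : ℕ) : ℕ := ∑ i ∈ Finset.Icc 1 l, (c i - c 1)

/-- The Benlolo–Sanderson element: the coefficient of `t^d` in `det M(t)`. -/
def BSf (c : ℕ → ℕ) (l n m : ℕ) (h : m + c 1 = n) : MvPolynomial (Pos c n) ℂ :=
  ((Mmat c n m h).det).coeff (dBS c l)

/-- The point of the nilradical determined by `ξ : P → ℂ`. -/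
def Xpt (c : ℕ → ℕ) (n : ℕ) (ξ : Pos c n → ℂ) : Matrix (Fin n) (Fin n) ℂ :=
  Matrix.of fun a b =>
    if h : b < a ∧ blk c (b.1 + 1) < blk c (a.1 + 1) then ξ ⟨(a, b), h⟩ else 0

/-!
Expand a cofactor of `M(t)` over permutations. A nonzero term picks in every row either the pivot
`t`, or an entry whose column lies in a strictly earlier block than the row. The deleted row is no
exception: it is matched with the deleted column, which lies in a strictly earlier block.

Fix a block `q`. At most `c` of the indices in blocks `≤ q` do not label a row of `M(t)`, and by
injectivity at most `#{indices in blocks < q}` of the remaining rows use a column in a block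
`< q`. Every other one of these rows must use its pivot, and lies in block `q`. This leaves at least
`#(block q) - c` pivots in block `q`; summing over `q` gives `d` factors `t` in every nonzero term.
-/

section Counting

variable {ι N α : Type*} [Fintype N] [PartialOrder α]

theorem card_filter_le_eq_card_filter_eq_add [DecidableEq α] [DecidableLE α] [DecidableLT α]
    (β : N → α) (q : α) : #{a | β a ≤ q} = #{a | β a = q} + #{a | β a < q} := by
  classical
  rw [← card_union_of_disjoint (disjoint_filter.2 fun a _ h => h.not_lt), ← filter_or]
  simp only [le_iff_eq_or_lt]

variable [Fintype ι]

theorem card_filter_comp_le_of_injective {f : ι → N} (hf : f.Injective) (p : N → Prop)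
    [DecidablePred p] : #{i | p (f i)} ≤ #{a | p a} :=
  card_le_card_of_injOn f (by simp [Set.MapsTo]) hf.injOn

theorem card_filter_le_card_filter_comp_add {f : ι → N} (hf : f.Injective) {r : ℕ}
    (hr : Fintype.card N ≤ Fintype.card ι + r) (p : N → Prop) [DecidablePred p] :
    #{a | p a} ≤ #{i | p (f i)} + r := by
  have hnot := card_filter_comp_le_of_injective hf (¬ p ·)
  have hN : #{a | p a} + #{a | ¬ p a} = Fintype.card N := card_filter_add_card_filter_not _
  have hι : #{i | p (f i)} + #{i | ¬ p (f i)} = Fintype.card ι := card_filter_add_card_filter_not _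
  omega

variable [DecidableEq N] [DecidableEq α] {row col : ι → N} {β : N → α} {r : ℕ}

theorem card_fiber_sub_le_card_pivots (hrow : row.Injective) (hcol : col.Injective)
    (hr : Fintype.card N ≤ Fintype.card ι + r)
    (h : ∀ i, row i = col i ∨ β (col i) < β (row i)) (q : α) :
    #{a | β a = q} - r ≤ #{i | row i = col i ∧ β (row i) = q} := by
  classical
  have hsplit := card_filter_le_eq_card_filter_eq_add β q
  have hrows := card_filter_le_card_filter_comp_add hrow hr (β · ≤ q)
  have hcols := card_filter_comp_le_of_injective hcol (β · < q)
  have hcover : ({i | β (row i) ≤ q} : Finset ι) ⊆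
      ({i | row i = col i ∧ β (row i) = q} : Finset ι) ∪
        ({i | β (col i) < q} : Finset ι) := by
    intro i hi
    simp only [mem_union, mem_filter_univ] at hi ⊢
    rcases h i with hpivot | hlt
    · exact hi.eq_or_lt.imp (⟨hpivot, ·⟩) (hpivot ▸ ·)
    · exact .inr (hlt.trans_le hi)
  have hunion := (card_le_card hcover).trans (card_union_le _ _)
  omega

theorem sum_card_fiber_sub_le_card_pivots (hrow : row.Injective) (hcol : col.Injective)
    (hr : Fintype.card N ≤ Fintype.card ι + r)
    (h : ∀ i, row i = col i ∨ β (col i) < β (row i)) (Q : Finset α) :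
    ∑ q ∈ Q, (#{a | β a = q} - r) ≤ #{i | row i = col i} :=
  calc ∑ q ∈ Q, (#{a | β a = q} - r)
      ≤ ∑ q ∈ Q, #{i | row i = col i ∧ β (row i) = q} :=
        sum_le_sum fun q _ => card_fiber_sub_le_card_pivots hrow hcol hr h q
    _ = #{i | row i = col i ∧ β (row i) ∈ Q} := by
        simp only [← filter_filter]
        exact sum_card_fiberwise_eq_card_filter _ _ _
    _ ≤ #{i | row i = col i} := card_le_card <| monotone_filter_right _ fun _ _ => And.left

end Counting

section Divisibility

variable {S : Type*} [CommRing S] {t : S}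

theorem pow_dvd_det_of_forall_perm {ι : Type*} [Fintype ι] [DecidableEq ι] {M : Matrix ι ι S}
    {d : ℕ} (h : ∀ τ : Equiv.Perm ι, (∀ i, M i (τ i) ≠ 0) →
      ∃ s : Finset ι, d ≤ #s ∧ ∀ i ∈ s, t ∣ M i (τ i)) :
    t ^ d ∣ M.det := by
  rw [← Matrix.det_transpose, Matrix.det_apply]
  refine dvd_sum fun τ _ => dvd_smul_of_dvd _ ?_
  simp only [Matrix.transpose_apply]
  by_cases hτ : ∀ i, M i (τ i) ≠ 0
  · obtain ⟨s, hds, hs⟩ := h τ hτ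
    calc t ^ d ∣ t ^ #s := pow_dvd_pow t hds
      _ = ∏ _i ∈ s, t := (prod_const t).symm
      _ ∣ ∏ i ∈ s, M i (τ i) := prod_dvd_prod_of_dvd _ _ hs
      _ ∣ ∏ i, M i (τ i) := prod_dvd_prod_of_subset _ _ _ (subset_univ s)
  · push Not at hτ
    obtain ⟨i, hi⟩ := hτ
    exact prod_eq_zero (f := fun i => M i (τ i)) (mem_univ i) hi ▸ dvd_zero _

theorem dvd_det_submatrix_succAbove_iff_dvd_adjugate {k : ℕ}
    {M : Matrix (Fin (k + 1)) (Fin (k + 1)) S} {i j : Fin (k + 1)} :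
    t ∣ (M.submatrix i.succAbove j.succAbove).det ↔ t ∣ M.adjugate j i := by
  rw [Matrix.adjugate_fin_succ_eq_det_submatrix, (isUnit_one.neg.pow _).dvd_mul_left]

/-- Here `β` sends an index to its block, `A` is the strictly block lower triangular matrix `𝒳`, and
`row` and `col` select the rows and columns of `𝒳 + t · Id` that form `M(t)`. -/
theorem t_pow_d_dvd_cofactor_general {ι N α : Type*} [Fintype ι] [DecidableEq ι] [Fintype N]
    [DecidableEq N] [PartialOrder α] [DecidableEq α] {A : Matrix N N S} {β : N → α}
    (hA : ∀ a b, A a b ≠ 0 → β b < β a) {row col : ι ↪ N} {r : ℕ}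
    (hr : Fintype.card N ≤ Fintype.card ι + r) {i j : ι} (hij : β (col j) < β (row i))
    (Q : Finset α) :
    t ^ (∑ q ∈ Q, (#{a | β a = q} - r)) ∣
      ((A + Matrix.scalar N t).submatrix row col).adjugate j i := by
  rw [Matrix.adjugate_apply]
  refine pow_dvd_det_of_forall_perm fun τ hτ => ?_
  have hτi : τ i = j := by
    by_contra hne
    exact hτ i (by rw [Matrix.updateRow_self, Pi.single_eq_of_ne hne])
  have hentry : ∀ a, row a = col (τ a) ∨ β (col (τ a)) < β (row a) := by
    intro a
    obtain rfl | ha := eq_or_ne a i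
    · exact .inr (hτi ▸ hij)
    refine or_iff_not_imp_left.2 fun hoff => hA _ _ ?_
    simpa [Matrix.updateRow_ne ha, Matrix.diagonal_apply_ne _ hoff] using hτ a
  have hpivots : ∑ q ∈ Q, (#{a | β a = q} - r) ≤ #{a | row a = col (τ a)} :=
    sum_card_fiber_sub_le_card_pivots row.injective (col.injective.comp τ.injective) hr hentry Q
  refine ⟨_, hpivots, fun a ha => ?_⟩
  replace ha : row a = col (τ a) := by simpa using ha
  have hai : a ≠ i := by
    rintro rfl
    rw [ha, hτi] at hij
    exact hij.false
  have hdiag : A (row a) (row a) = 0 := by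
    by_contra hne
    exact (hA _ _ hne).false
  simp [Matrix.updateRow_ne hai, ← ha, hdiag]

end Divisibility

section Blocks

variable {c : ℕ → ℕ}

theorem blkSum_mono : Monotone (blkSum c) := fun _ _ h =>
  sum_le_sum_of_subset (Icc_subset_Icc_right h)

theorem blkSum_succ (q : ℕ) : blkSum c (q + 1) = blkSum c q + c (q + 1) :=
  sum_Icc_succ_top (by omega) c

theorem blk_le_iff {l a : ℕ} (ha : a ≤ blkSum c l) (q : ℕ) : blk c a ≤ q ↔ a ≤ blkSum c q :=
  ⟨fun h => (Nat.sInf_mem (s := {j | a ≤ blkSum c j}) ⟨l, ha⟩).trans (blkSum_mono h),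
    fun h => Nat.sInf_le h⟩

theorem card_filter_blk_le {l n q : ℕ} (hn : n = blkSum c l) (hq : q ≤ l) :
    #{a : Fin n | blk c (a + 1) ≤ q} = blkSum c q := by
  have hblk (a : Fin n) : blk c (a + 1) ≤ q ↔ (a : ℕ) < blkSum c q :=
    blk_le_iff (a.is_lt.trans_eq hn) q
  simp only [hblk, Fin.card_filter_val_lt]
  exact min_eq_right ((blkSum_mono hq).trans_eq hn.symm)

theorem card_filter_blk_eq {l n q : ℕ} (hn : n = blkSum c l) (hq : q ∈ Icc 1 l) :
    #{a : Fin n | blk c (a + 1) = q} = c q := by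
  obtain ⟨hq1, hql⟩ := mem_Icc.1 hq
  obtain ⟨p, rfl⟩ := Nat.exists_eq_add_of_le' hq1
  have hsplit := card_filter_le_eq_card_filter_eq_add (fun a : Fin n => blk c (a + 1)) (p + 1)
  simp only [Nat.lt_succ_iff] at hsplit
  rw [card_filter_blk_le hn hql, card_filter_blk_le hn (by omega), blkSum_succ] at hsplit
  omega

theorem dBS_eq_sum_card_filter_blk_sub {l n : ℕ} (hn : n = blkSum c l) :
    dBS c l = ∑ q ∈ Icc 1 l, (#{a : Fin n | blk c (a + 1) = q} - c 1) :=
  sum_congr rfl fun q hq => by rw [card_filter_blk_eq hn hq]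

theorem blk_lt_of_genX_map_ne_zero {n : ℕ} {S : Type*} [Semiring S]
    {f : MvPolynomial (Pos c n) ℂ →+* S} {a b : Fin n} (h : (genX c n).map f a b ≠ 0) :
    blk c (b + 1) < blk c (a + 1) := by
  by_contra hlt
  have hzero : genX c n a b = 0 := dif_neg fun hpos => hlt hpos.2
  exact h (by rw [Matrix.map_apply, hzero, map_zero])

theorem Mmat_eq_submatrix {n m : ℕ} (h : m + c 1 = n) :
    Mmat c n m h = ((genX c n).map Polynomial.C + Matrix.scalar (Fin n) Polynomial.X).submatrix
      ((Fin.addNatEmb (c 1)).trans (finCongr h).toEmbedding)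
      (Fin.castLEEmb (h ▸ Nat.le_add_right m (c 1))) := by
  ext1 i j
  simp [Mmat, Matrix.diagonal_apply]

end Blocks

/-- Lemma 3.9: if the `(i,j)` entry of `M(t)` is one of the variables `x_{c+i,j}` of `m⁻`
(that is, `blk (c+i) > blk j`), then the cofactor minor `M^{i,j}`, obtained from `M(t)` by
deleting row `i` and column `j`, is divisible by `t^d` in `R[t]`. -/
theorem t_pow_d_dvd_cofactor
    (l : ℕ) (hl : 2 ≤ l) (c : ℕ → ℕ) (hc : ∀ i ∈ Finset.Icc 1 l, 0 < c i)
    (hcl : c l = c 1) (n : ℕ) (hn : n = blkSum c l)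
    (m k : ℕ) (hm : m + c 1 = n) (hk : k + 1 = m)
    (i j : Fin m) (hij : blk c (j.1 + 1) < blk c (c 1 + i.1 + 1)) :
    (Polynomial.X : Polynomial (MvPolynomial (Pos c n) ℂ)) ^ (dBS c l) ∣
      ((Mmat c n m hm).submatrix
        (fun a : Fin k => Fin.cast hk ((Fin.cast hk.symm i).succAbove a))
        (fun a : Fin k => Fin.cast hk ((Fin.cast hk.symm j).succAbove a))).det := by
  subst hk
  change _ ∣ ((Mmat c n (k + 1) hm).submatrix i.succAbove j.succAbove).det
  rw [dvd_det_submatrix_succAbove_iff_dvd_adjugate, Mmat_eq_submatrix,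
    dBS_eq_sum_card_filter_blk_sub hn]
  exact t_pow_d_dvd_cofactor_general (β := fun a : Fin n => blk c (a + 1))
    (fun _ _ => blk_lt_of_genX_map_ne_zero) (by simp [hm]) (by simpa [add_comm] using hij) _

end
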